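/- arXiv:2411.19293 — 3 statements merged into one kernel-verified Lean document; each statement's English description precedes it below -/
import Mathlib

section
/- For any finite families (u_j)_{j∈J} and (v_j)_{j∈J} of n×n real matrices indexed by the same finite set J, one has (Σ_{j∈J} ‖u_j‖_F²)·(Σ_{j∈J} ‖v_j‖_F²) − (Σ_{j∈J} ⟨u_j, v_j⟩_F)² ≥ (1/n)·Σ_{j∈J} ‖[v_j, u_j]‖_F². -/
open Matrix

/-- Frobenius inner product of two `n × n` real matrices: `⟨A, B⟩_F = tr(Aᵀ B)`. -/
noncomputable def frobIP {n : ℕ} (A B : Matrix (Fin n) (Fin n) ℝ) : ℝ := (Aᵀ * B).trace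

/-- Frobenius norm of an `n × n` real matrix. -/
noncomputable def frobNorm {n : ℕ} (A : Matrix (Fin n) (Fin n) ℝ) : ℝ := Real.sqrt (frobIP A A)


theorem frobIP_eq {n : ℕ} (A B : Matrix (Fin n) (Fin n) ℝ) :
    frobIP A B = ∑ i, ∑ j, A i j * B i j := by
  unfold frobIP
  simp only [Matrix.trace, Matrix.diag, Matrix.mul_apply, Matrix.transpose_apply]
  exact Finset.sum_comm

theorem frobNorm_sq {n : ℕ} (A : Matrix (Fin n) (Fin n) ℝ) :
    frobNorm A ^ 2 = frobIP A A := by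
  unfold frobNorm
  apply Real.sq_sqrt
  rw [frobIP_eq]
  exact Finset.sum_nonneg fun i _ => Finset.sum_nonneg fun j _ => mul_self_nonneg _

/-- The Laplacian bound for the complete graph. -/
theorem antisymm_bound {n : ℕ} (hn : 0 < n) (m : Fin n → Fin n → ℝ)
    (hm : ∀ i j, m j i = - m i j) :
    2 * ∑ i, (∑ j, m i j) ^ 2 ≤ n * ∑ i, ∑ j, m i j ^ 2 := by
  have hn' : (0 : ℝ) < n := by exact_mod_cast hn
  obtain ⟨d, hd⟩ : ∃ d : Fin n → ℝ, ∀ i, d i = ∑ j, m i j := ⟨_, fun _ => rfl⟩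
  simp only [← hd]
  have h0 : 0 ≤ ∑ i, ∑ j, (n * m i j - (d i - d j)) ^ 2 :=
    Finset.sum_nonneg fun i _ => Finset.sum_nonneg fun j _ => sq_nonneg _
  have h1 : ∑ i, ∑ j, (n * m i j - (d i - d j)) ^ 2
      = n ^ 2 * ∑ i, ∑ j, m i j ^ 2 - 2 * n * ∑ i, ∑ j, m i j * d i
        + 2 * n * ∑ i, ∑ j, m i j * d j + ∑ i, ∑ j : Fin n, d i ^ 2 + ∑ i : Fin n, ∑ j, d j ^ 2
        - 2 * ∑ i, ∑ j, d i * d j := by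
    simp only [Finset.mul_sum, ← Finset.sum_add_distrib, ← Finset.sum_sub_distrib]
    refine Finset.sum_congr rfl fun i _ => Finset.sum_congr rfl fun j _ => ?_
    ring
  have h2 : ∑ i, ∑ j, m i j * d i = ∑ i, d i ^ 2 := by
    refine Finset.sum_congr rfl fun i _ => ?_
    rw [← Finset.sum_mul, ← hd, sq]
  have h3 : ∑ i, ∑ j, m i j * d j = - ∑ i, d i ^ 2 := by
    rw [Finset.sum_comm, ← h2, ← Finset.sum_neg_distrib]
    refine Finset.sum_congr rfl fun i _ => ?_
    rw [← Finset.sum_neg_distrib]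
    refine Finset.sum_congr rfl fun j _ => ?_
    rw [hm i j]; ring
  have h4 : ∑ i, ∑ j : Fin n, d i ^ 2 = n * ∑ i, d i ^ 2 := by
    simp [Finset.mul_sum]
  have h5 : ∑ i : Fin n, ∑ j, d j ^ 2 = n * ∑ i, d i ^ 2 := by
    simp
  have h6 : ∑ i, ∑ j, d i * d j = (∑ i, d i) ^ 2 := by
    rw [sq, Finset.sum_mul_sum]
  rw [h1, h2, h3, h4, h5, h6] at h0
  have h7 : 0 ≤ (n : ℝ) * (n * ∑ i, ∑ j, m i j ^ 2 - 2 * ∑ i, d i ^ 2) := by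
    nlinarith [sq_nonneg (∑ i, d i)]
  have := nonneg_of_mul_nonneg_right h7 hn'
  linarith

theorem index_bound {n : ℕ} (T : Fin n → Fin n → Fin n → Fin n → ℝ)
    (h0 : ∀ i j k l, 0 ≤ T i j k l) (hs : ∀ i j k l, T i j k l = T k l i j) :
    ∑ i, ∑ j, T i j j i + 2 * ∑ i, ∑ l, (if i = l then 0 else ∑ j, T i j j l)
      ≤ ∑ i, ∑ j, ∑ k, ∑ l, T i j k l := by
  have hA : ∑ i, ∑ j, ∑ k, ∑ l, (if j = k then T i j k l else 0)
      = ∑ i, ∑ j, ∑ l, T i j j l := by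
    refine Finset.sum_congr rfl fun i _ => Finset.sum_congr rfl fun j _ => ?_
    rw [Finset.sum_comm]
    simp
  have hA' : ∑ i, ∑ j, ∑ l, T i j j l
      = ∑ i, ∑ j, T i j j i + ∑ i, ∑ l, (if i = l then 0 else ∑ j, T i j j l) := by
    rw [← Finset.sum_add_distrib]
    refine Finset.sum_congr rfl fun i _ => ?_
    rw [Finset.sum_comm]
    have : ∑ j, T i j j i = ∑ l, (if i = l then ∑ j, T i j j l else 0) := by simp
    rw [this, ← Finset.sum_add_distrib]
    refine Finset.sum_congr rfl fun l _ => ?_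
    split_ifs <;> simp
  have hB : ∑ i, ∑ j, ∑ k, ∑ l, (if i = l then (if j = k then 0 else T i j k l) else 0)
      = ∑ i, ∑ l, (if i = l then 0 else ∑ j, T i j j l) := by
    have e1 : ∑ i, ∑ j, ∑ k, ∑ l, (if i = l then (if j = k then 0 else T i j k l) else 0)
      = ∑ i, ∑ j, ∑ k, (if j = k then 0 else T k i i j) := by
      refine Finset.sum_congr rfl fun i _ => Finset.sum_congr rfl fun j _ =>
        Finset.sum_congr rfl fun k _ => ?_
      rw [Finset.sum_ite_eq]
      simp only [Finset.mem_univ, if_true]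
      rw [hs]
    rw [e1, Finset.sum_comm]
    have e2 : ∀ j, ∑ i, ∑ k, (if j = k then 0 else T k i i j)
        = ∑ k, (if k = j then 0 else ∑ i, T k i i j) := by
      intro j
      rw [Finset.sum_comm]
      refine Finset.sum_congr rfl fun k _ => ?_
      by_cases h : j = k
      · simp [h]
      · simp [h, Ne.symm h]
    simp only [e2]
    exact Finset.sum_comm
  have hle : ∑ i, ∑ j, ∑ k, ∑ l, (if j = k then T i j k l else 0)
      + ∑ i, ∑ j, ∑ k, ∑ l, (if i = l then (if j = k then 0 else T i j k l) else 0)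
      ≤ ∑ i, ∑ j, ∑ k, ∑ l, T i j k l := by
    simp only [← Finset.sum_add_distrib]
    refine Finset.sum_le_sum fun i _ => Finset.sum_le_sum fun j _ =>
        Finset.sum_le_sum fun k _ => Finset.sum_le_sum fun l _ => ?_
    have := h0 i j k l
    split_ifs <;> simp [this]
  rw [hA, hA', hB] at hle
  linarith

theorem lagrange {n : ℕ} (a b : Matrix (Fin n) (Fin n) ℝ) :
    ∑ i, ∑ j, ∑ k, ∑ l, (a i j * b k l - b i j * a k l) ^ 2
      = 2 * (frobIP a a * frobIP b b - frobIP a b ^ 2) := by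
  have key : ∀ f g : Fin n → Fin n → ℝ, (∑ i, ∑ j, f i j) * (∑ i, ∑ j, g i j)
      = ∑ i, ∑ j, ∑ k, ∑ l, f i j * g k l := by
    intro f g
    simp only [Finset.sum_mul]
    simp only [Finset.mul_sum]
  have e : 2 * (frobIP a a * frobIP b b - frobIP a b ^ 2)
      = frobIP a a * frobIP b b + frobIP b b * frobIP a a - 2 * (frobIP a b * frobIP a b) := by
    ring
  rw [e]
  simp only [frobIP_eq, key]
  simp only [Finset.mul_sum, ← Finset.sum_add_distrib, ← Finset.sum_sub_distrib]
  refine Finset.sum_congr rfl fun i _ => Finset.sum_congr rfl fun j _ =>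
        Finset.sum_congr rfl fun k _ => Finset.sum_congr rfl fun l _ => ?_
  ring

theorem gram_nonneg {n : ℕ} (a b : Matrix (Fin n) (Fin n) ℝ) :
    0 ≤ frobIP a a * frobIP b b - frobIP a b ^ 2 := by
  have h := lagrange a b
  have : 0 ≤ ∑ i, ∑ j, ∑ k, ∑ l, (a i j * b k l - b i j * a k l) ^ 2 :=
    Finset.sum_nonneg fun i _ => Finset.sum_nonneg fun j _ =>
      Finset.sum_nonneg fun k _ => Finset.sum_nonneg fun l _ => sq_nonneg _
  linarith

theorem single_bound {n : ℕ} (hn : 0 < n) (a b : Matrix (Fin n) (Fin n) ℝ) :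
    frobIP (b * a - a * b) (b * a - a * b)
      ≤ n * (frobIP a a * frobIP b b - frobIP a b ^ 2) := by
  have hn' : (0 : ℝ) < n := by exact_mod_cast hn
  have hI := index_bound (fun i j k l => (a i j * b k l - b i j * a k l) ^ 2)
    (fun _ _ _ _ => sq_nonneg _) (fun _ _ _ _ => by ring)
  rw [lagrange] at hI
  have hD := antisymm_bound hn (fun i j => a i j * b j i - b i j * a j i)
    (fun i j => by ring)
  have hc : ∀ i l, (b * a - a * b) i l = - ∑ j, (a i j * b j l - b i j * a j l) := by
    intro i l
    simp [Matrix.mul_apply]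
  have hS : frobIP (b * a - a * b) (b * a - a * b)
      = ∑ i, (∑ j, (a i j * b j i - b i j * a j i)) ^ 2
        + ∑ i, ∑ l, (if i = l then 0 else (∑ j, (a i j * b j l - b i j * a j l)) ^ 2) := by
    rw [frobIP_eq, ← Finset.sum_add_distrib]
    refine Finset.sum_congr rfl fun i _ => ?_
    have : (∑ j, (a i j * b j i - b i j * a j i)) ^ 2
        = ∑ l, (if i = l then (∑ j, (a i j * b j l - b i j * a j l)) ^ 2 else 0) := by simp
    rw [this, ← Finset.sum_add_distrib]
    refine Finset.sum_congr rfl fun l _ => ?_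
    rw [hc]
    split_ifs <;> ring
  have hO : ∑ i, ∑ l, (if i = l then 0 else (∑ j, (a i j * b j l - b i j * a j l)) ^ 2)
      ≤ n * ∑ i, ∑ l, (if i = l then 0 else ∑ j, (a i j * b j l - b i j * a j l) ^ 2) := by
    simp only [Finset.mul_sum]
    refine Finset.sum_le_sum fun i _ => Finset.sum_le_sum fun l _ => ?_
    split_ifs
    · simp
    · have := sq_sum_le_card_mul_sum_sq (s := Finset.univ)
        (f := fun j => a i j * b j l - b i j * a j l)
      simpa [Finset.mul_sum] using this
  rw [hS]
  have := mul_le_mul_of_nonneg_left hI hn'.le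
  nlinarith

theorem cross_bound {a b c A B C : ℝ} (ha : 0 ≤ a) (hb : 0 ≤ b) (hA : 0 ≤ A) (hB : 0 ≤ B)
    (h : c ^ 2 ≤ a * b) (H : C ^ 2 ≤ A * B) : 2 * (c * C) ≤ a * B + A * b := by
  have h1 : (2 * (c * C)) ^ 2 ≤ (a * B + A * b) ^ 2 := by
    have := mul_le_mul h H (sq_nonneg C) (mul_nonneg ha hb)
    nlinarith [sq_nonneg (a * B - A * b)]
  exact le_of_sq_le_sq' h1 (by positivity)
where le_of_sq_le_sq' {x y : ℝ} (h : x ^ 2 ≤ y ^ 2) (hy : 0 ≤ y) : x ≤ y :=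
  (abs_le_of_sq_le_sq' h hy).2

theorem gram_sum {J : Type*} (s : Finset J) (a b c : J → ℝ) (ha : ∀ j, 0 ≤ a j)
    (hb : ∀ j, 0 ≤ b j) (h : ∀ j, 0 ≤ a j * b j - c j ^ 2) :
    ∑ j ∈ s, (a j * b j - c j ^ 2) ≤ (∑ j ∈ s, a j) * (∑ j ∈ s, b j) - (∑ j ∈ s, c j) ^ 2 := by
  classical
  induction s using Finset.induction_on with
  | empty => simp
  | insert x s hx ih =>
    rw [Finset.sum_insert hx, Finset.sum_insert hx, Finset.sum_insert hx, Finset.sum_insert hx]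
    have h0 : 0 ≤ ∑ j ∈ s, (a j * b j - c j ^ 2) := Finset.sum_nonneg fun j _ => h j
    have := cross_bound (ha x) (hb x) (Finset.sum_nonneg fun j (_ : j ∈ s) => ha j)
      (Finset.sum_nonneg fun j (_ : j ∈ s) => hb j) (c := c x) (C := ∑ j ∈ s, c j)
      (by linarith [h x]) (by linarith)
    nlinarith

/-- For finite families `(u_j)` and `(v_j)` of `n × n` real matrices indexed by a finite set `J`,
`(Σ_j ‖u_j‖_F²)·(Σ_j ‖v_j‖_F²) − (Σ_j ⟨u_j, v_j⟩_F)² ≥ (1/n)·Σ_j ‖[v_j, u_j]‖_F²`,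
where `[A, B] = AB − BA`. -/
theorem sum_frobNorm_sq_mul_sub_sq_ge (n : ℕ) (J : Type*) [Fintype J]
    (u v : J → Matrix (Fin n) (Fin n) ℝ) :
    (∑ j, frobNorm (u j) ^ 2) * (∑ j, frobNorm (v j) ^ 2) - (∑ j, frobIP (u j) (v j)) ^ 2
      ≥ (n : ℝ)⁻¹ * ∑ j, frobNorm (v j * u j - u j * v j) ^ 2 := by
  have hg := gram_sum Finset.univ (fun j => frobNorm (u j) ^ 2) (fun j => frobNorm (v j) ^ 2)
    (fun j => frobIP (u j) (v j)) (fun _ => sq_nonneg _) (fun _ => sq_nonneg _)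
    (fun j => by simpa only [frobNorm_sq] using gram_nonneg (u j) (v j))
  refine le_trans ?_ hg
  rw [Finset.mul_sum]
  refine Finset.sum_le_sum fun j _ => ?_
  simp only [frobNorm_sq]
  rcases Nat.eq_zero_or_pos n with h | h
  · have := gram_nonneg (u j) (v j)
    have hz : (n : ℝ)⁻¹ = 0 := by simp [h]
    rw [hz]
    linarith
  · have hn' : (0 : ℝ) < n := by exact_mod_cast h
    rw [inv_mul_le_iff₀ hn']
    exact single_bound h (u j) (v j)
end

section
/- For every R > 0, the curvature component F_{23} of the soliton connection W evaluated at the point −R·e₁ (where e₁ is the first standard basis vector of ℝⁿ) has Frobenius norm ‖F_{23}(−R e₁)‖_F = √2·((2a − 1)R² + 2b)/(aR² + b)². -/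
open scoped BigOperators

noncomputable section

/-- Euclidean space `ℝⁿ`. -/
abbrev En (n : ℕ) := EuclideanSpace ℝ (Fin n)

/-- `n × n` real matrices, represented entrywise. -/
abbrev Mat (n : ℕ) := Fin n → Fin n → ℝ

variable {n : ℕ}

/-- Frobenius inner product `⟨A,B⟩_F = tr(AᵀB) = Σ_{μν} A_{μν} B_{μν}`. -/
def fipE (A B : Mat n) : ℝ := ∑ μ, ∑ ν, A μ ν * B μ ν

/-- Frobenius norm. -/
def fnormE (A : Mat n) : ℝ := Real.sqrt (fipE A A)

/-- Matrix commutator `[A, B] = AB − BA`, entrywise. -/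
def brkt (A B : Mat n) : Mat n := fun μ ν => ∑ k, (A μ k * B k ν - B μ k * A k ν)

/-- `A` is skew-symmetric. -/
def skewM (A : Mat n) : Prop := ∀ μ ν, A ν μ = -A μ ν

/-- Partial derivative `∂_i f` of a scalar function on `ℝⁿ`. -/
def pder (i : Fin n) (f : En n → ℝ) (y : En n) : ℝ :=
  fderiv ℝ f y (EuclideanSpace.single i 1)

/-- Euclidean Laplacian `Δf = Σ_i ∂_i ∂_i f` of a scalar function on `ℝⁿ`. -/
def lapS (f : En n → ℝ) (y : En n) : ℝ := ∑ i, pder i (fun z => pder i f z) y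

/-- Componentwise partial derivative `∂_i u` of a matrix-valued function on `ℝⁿ`. -/
def pderM (i : Fin n) (u : En n → Mat n) (y : En n) : Mat n :=
  fun μ ν => pder i (fun z => u z μ ν) y

/-- Componentwise Laplacian `Δu` of a matrix-valued function on `ℝⁿ`. -/
def lapM (u : En n → Mat n) (y : En n) : Mat n := fun μ ν => lapS (fun z => u z μ ν) y

/-- The constant `a = √(n−2)/(2√2)`. -/
def aC (n : ℕ) : ℝ := Real.sqrt ((n : ℝ) - 2) / (2 * Real.sqrt 2)

/-- The constant `b = (1/2)(6n − 12 − (n+2)√(2n−4))`. -/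
def bC (n : ℕ) : ℝ := (1 / 2) * (6 * (n : ℝ) - 12 - ((n : ℝ) + 2) * Real.sqrt (2 * (n : ℝ) - 4))

/-- `σ_i(y)`, the skew matrix with entries `(σ_i(y))^μ_ν = δ_{iν} y^μ − δ_{iμ} y^ν`. -/
def sigmaM (i : Fin n) (y : En n) : Mat n :=
  fun μ ν => (if i = ν then y μ else 0) - (if i = μ then y ν else 0)

/-- The soliton connection `W_i(y) = σ_i(y)/(a|y|² + b)`. -/
def Wc (i : Fin n) (y : En n) : Mat n :=
  fun μ ν => sigmaM i y μ ν / (aC n * ‖y‖ ^ 2 + bC n)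

/-- The curvature `F_{ij} = ∂_i W_j − ∂_j W_i + [W_i, W_j]` of the soliton connection `W`. -/
def Fc (i j : Fin n) (y : En n) : Mat n :=
  pderM i (Wc j) y - pderM j (Wc i) y + brkt (Wc i y) (Wc j y)

/-- The linearized operator `L` of the rescaled Yang–Mills de Turck flow at the soliton `W`:
`(Lu)_j = Δu_j − (1/2)Σ_i y_i ∂_i u_j − (1/2)u_j + 2Σ_i [W_i, ∂_i u_j]
  + Σ_i [W_i, [W_i, u_j]] + 2Σ_i [u_i, F_{ij}]`. -/
def Lop (u : En n → Fin n → Mat n) (y : En n) (j : Fin n) : Mat n :=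
  lapM (fun z => u z j) y
    - (1 / 2 : ℝ) • (∑ i, y i • pderM i (fun z => u z j) y)
    - (1 / 2 : ℝ) • u y j
    + (2 : ℝ) • ∑ i, brkt (Wc i y) (pderM i (fun z => u z j) y)
    + ∑ i, brkt (Wc i y) (brkt (Wc i y) (u y j))
    + (2 : ℝ) • ∑ i, brkt (u y i) (Fc i j y)

/-- Squared Frobenius norm of a tuple of matrices: `‖u‖_F² = Σ_j ‖u_j‖_F²`. -/
def tnormSq (v : Fin n → Mat n) : ℝ := ∑ j, fipE (v j) (v j)

/-- The Gaussian weight `ρ(y) = e^{−|y|²/4}`. -/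
def gauss (y : En n) : ℝ := Real.exp (-‖y‖ ^ 2 / 4)

end

lemma pder_quot {n : ℕ} (i : Fin n) (L : En n →L[ℝ] ℝ) (a b : ℝ) (y : En n)
    (hy : y i = 0) (hD : a * ‖y‖ ^ 2 + b ≠ 0) :
    pder i (fun z => L z / (a * ‖z‖ ^ 2 + b)) y
      = L (EuclideanSpace.single i 1) / (a * ‖y‖ ^ 2 + b) := by
  unfold pder
  have h1 : HasFDerivAt (fun z : En n => a * ‖z‖ ^ 2 + b)
      (a • (2 • (innerSL ℝ y))) y :=
    (((hasStrictFDerivAt_norm_sq y).hasFDerivAt).const_mul a).add_const b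
  have h2 := (hasDerivAt_inv hD).comp_hasFDerivAt y h1
  have h3 := (L.hasFDerivAt (x := y)).mul h2
  have h4 : (fun z => L z / (a * ‖z‖ ^ 2 + b)) =
      (fun z => L z) * ((fun x => x⁻¹) ∘ fun z : En n => a * ‖z‖ ^ 2 + b) := by
    funext z
    simp [div_eq_mul_inv]
  rw [h4, h3.fderiv]
  simp [EuclideanSpace.inner_single_right, hy, div_eq_mul_inv, mul_comm]

lemma pder_Wc {n : ℕ} (i j μ ν : Fin n) (y : En n)
    (hy : y i = 0) (hD : aC n * ‖y‖ ^ 2 + bC n ≠ 0) :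
    pder i (fun z => Wc j z μ ν) y
      = sigmaM j (EuclideanSpace.single i 1) μ ν / (aC n * ‖y‖ ^ 2 + bC n) := by
  have h := pder_quot i ((if j = ν then (EuclideanSpace.proj μ : En n →L[ℝ] ℝ) else 0)
    - (if j = μ then (EuclideanSpace.proj ν : En n →L[ℝ] ℝ) else 0)) (aC n) (bC n) y hy hD
  have e : ∀ z : En n, ((if j = ν then (EuclideanSpace.proj μ : En n →L[ℝ] ℝ) else 0)
    - (if j = μ then (EuclideanSpace.proj ν : En n →L[ℝ] ℝ) else 0)) z = sigmaM j z μ ν := by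
    intro z
    unfold sigmaM
    split_ifs <;> simp
  simp only [e] at h
  exact h

lemma aC_ge {n : ℕ} (hn : 5 ≤ n) : 1 ≤ 2 * aC n := by
  have hn2 : (5 : ℝ) ≤ n := by exact_mod_cast hn
  have h : Real.sqrt 2 ≤ Real.sqrt ((n : ℝ) - 2) := Real.sqrt_le_sqrt (by linarith)
  have h2 : 0 < Real.sqrt 2 := by positivity
  unfold aC
  rw [show 2 * (Real.sqrt ((n : ℝ) - 2) / (2 * Real.sqrt 2))
    = Real.sqrt ((n : ℝ) - 2) / Real.sqrt 2 by field_simp]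
  rwa [le_div_iff₀ h2, one_mul]

lemma bC_pos {n : ℕ} (hn : 5 ≤ n) (hn' : n ≤ 9) : 0 < bC n := by
  have h5 : (5 : ℝ) ≤ n := by exact_mod_cast hn
  have h9 : (n : ℝ) ≤ 9 := by exact_mod_cast hn'
  have h : Real.sqrt (2 * (n : ℝ) - 4) < (6 * (n : ℝ) - 12) / (n + 2) := by
    rw [Real.sqrt_lt' (by apply div_pos <;> linarith), div_pow, lt_div_iff₀ (by positivity)]
    nlinarith [mul_pos (show (0 : ℝ) < n - 2 by linarith)
      (mul_pos (show (0 : ℝ) < n - 4 by linarith) (show (0 : ℝ) < 10 - n by linarith))]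
  rw [lt_div_iff₀ (by positivity)] at h
  unfold bC
  linarith

lemma brkt_W {n : ℕ} (o i j μ ν : Fin n) (R : ℝ) (hoi : o ≠ i) (hoj : o ≠ j) (hij : i ≠ j) :
    brkt (sigmaM i (EuclideanSpace.single o (-R))) (sigmaM j (EuclideanSpace.single o (-R))) μ ν
      = -R ^ 2 * ((if μ = i ∧ ν = j then 1 else 0) - (if μ = j ∧ ν = i then 1 else 0)) := by
  unfold brkt sigmaM
  simp only [PiLp.single_apply]
  rw [Finset.sum_eq_single o]
  · grind
  · intro k _ hk
    grind
  · simp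

lemma entry_eq {n : ℕ} (i j μ ν : Fin n) (D R : ℝ) (hij : i ≠ j) :
    sigmaM j (EuclideanSpace.single i 1) μ ν / D - sigmaM i (EuclideanSpace.single j 1) μ ν / D
      + -R ^ 2 * ((if μ = i ∧ ν = j then 1 else 0) - (if μ = j ∧ ν = i then 1 else 0)) / D ^ 2
      = (2 / D - R ^ 2 / D ^ 2)
        * ((if μ = i ∧ ν = j then 1 else 0) - (if μ = j ∧ ν = i then 1 else 0)) := by
  simp only [sigmaM, PiLp.single_apply]
  by_cases h1 : μ = i <;> by_cases h2 : ν = j <;> by_cases h3 : μ = j <;>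
    by_cases h4 : ν = i <;> simp_all [eq_comm] <;> ring

lemma sq_entry {n : ℕ} (i j μ ν : Fin n) (c : ℝ) (hij : i ≠ j) :
    c * ((if μ = i ∧ ν = j then (1:ℝ) else 0) - (if μ = j ∧ ν = i then 1 else 0))
        * (c * ((if μ = i ∧ ν = j then 1 else 0) - (if μ = j ∧ ν = i then 1 else 0)))
        = (if μ = i then (if ν = j then c ^ 2 else 0) else 0)
          + (if μ = j then (if ν = i then c ^ 2 else 0) else 0) := by
  by_cases h1 : μ = i <;> by_cases h2 : ν = j <;> by_cases h3 : μ = j <;>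
    by_cases h4 : ν = i <;> simp_all [pow_two]

theorem curvature_at_minus_Re1 (n : ℕ) (hn : 5 ≤ n) (hn' : n ≤ 9) (R : ℝ) (hR : 0 < R) :
    fnormE (Fc (⟨1, by omega⟩ : Fin n) (⟨2, by omega⟩ : Fin n)
        (EuclideanSpace.single (⟨0, by omega⟩ : Fin n) (-R)))
      = Real.sqrt 2 * ((2 * aC n - 1) * R ^ 2 + 2 * bC n) / (aC n * R ^ 2 + bC n) ^ 2 := by
  have ha := aC_ge hn
  have hb := bC_pos hn hn'
  have hD : 0 < aC n * R ^ 2 + bC n := by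
    have : 0 < aC n := by linarith
    positivity
  have hN : 0 ≤ (2 * aC n - 1) * R ^ 2 + 2 * bC n := by
    have : 0 ≤ 2 * aC n - 1 := by linarith
    positivity
  generalize hi : (⟨1, by omega⟩ : Fin n) = i
  generalize hj : (⟨2, by omega⟩ : Fin n) = j
  generalize ho : (⟨0, by omega⟩ : Fin n) = o
  have hoi : o ≠ i := by subst hi ho; simp
  have hoj : o ≠ j := by subst hj ho; simp
  have hij : i ≠ j := by subst hi hj; simp
  have hnorm : ‖(EuclideanSpace.single o (-R) : En n)‖ ^ 2 = R ^ 2 := by simp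
  set D := aC n * R ^ 2 + bC n with hDdef
  set c := ((2 * aC n - 1) * R ^ 2 + 2 * bC n) / D ^ 2 with hc
  have hF : ∀ μ ν, Fc i j (EuclideanSpace.single o (-R)) μ ν
      = c * ((if μ = i ∧ ν = j then 1 else 0) - (if μ = j ∧ ν = i then 1 else 0)) := by
    intro μ ν
    have hbr : brkt (Wc i (EuclideanSpace.single o (-R))) (Wc j (EuclideanSpace.single o (-R))) μ ν
        = brkt (sigmaM i (EuclideanSpace.single o (-R)))
            (sigmaM j (EuclideanSpace.single o (-R))) μ ν / D ^ 2 := by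
      unfold brkt Wc
      rw [hnorm, ← hDdef, Finset.sum_div]
      refine Finset.sum_congr rfl fun k _ => ?_
      field_simp
    have hcc : c = 2 / D - R ^ 2 / D ^ 2 := by
      rw [hc]
      field_simp
      rw [hDdef]
      ring
    have hne : aC n * ‖(EuclideanSpace.single o (-R) : En n)‖ ^ 2 + bC n ≠ 0 := by
      rw [hnorm]; exact hD.ne'
    simp only [Fc, Pi.add_apply, Pi.sub_apply, pderM]
    rw [pder_Wc i j μ ν _ (by simp [hoi.symm]) hne, pder_Wc j i μ ν _ (by simp [hoj.symm]) hne,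
      hbr, brkt_W o i j μ ν R hoi hoj hij, hnorm, ← hDdef, hcc]
    exact entry_eq i j μ ν D R hij
  have hfip : fipE (Fc i j (EuclideanSpace.single o (-R))) (Fc i j (EuclideanSpace.single o (-R)))
      = 2 * c ^ 2 := by
    unfold fipE
    simp only [hF]
    have : ∀ μ ν : Fin n, c * ((if μ = i ∧ ν = j then (1:ℝ) else 0) - (if μ = j ∧ ν = i then 1 else 0))
        * (c * ((if μ = i ∧ ν = j then 1 else 0) - (if μ = j ∧ ν = i then 1 else 0)))
        = (if μ = i then (if ν = j then c ^ 2 else 0) else 0)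
          + (if μ = j then (if ν = i then c ^ 2 else 0) else 0) := by
      exact fun μ ν => sq_entry i j μ ν c hij
    simp only [this, Finset.sum_add_distrib]
    rw [Finset.sum_eq_single i, Finset.sum_eq_single j] <;> simp +contextual
    ring
  unfold fnormE
  rw [hfip, Real.sqrt_mul (by norm_num), Real.sqrt_sq (by positivity), hc, mul_div_assoc]
end

section
/- For each α ∈ {1,…,n}, the tuple F_α = (F_{α1},…,F_{αn}) of curvature components of the soliton W satisfies L(F_α) = (1/2)·F_α pointwise on ℝⁿ; that is, each F_α is an eigenfunction of −L with eigenvalue −1/2 (corresponding to spatial translations of the soliton W). -/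
open scoped BigOperators

noncomputable section SpatialHelpers

/-- Kronecker delta. -/
def dl {n : ℕ} (i j : Fin n) : ℝ := if i = j then 1 else 0

theorem dl_comm {n : ℕ} (i j : Fin n) : dl i j = dl j i := by
  unfold dl; simp only [eq_comm]

theorem dl_sum {n : ℕ} (i : Fin n) (g : Fin n → ℝ) : ∑ k, dl k i * g k = g i := by
  simp [dl]

theorem dl_self {n : ℕ} (i : Fin n) : dl i i = 1 := by simp [dl]

/-- wedge of two vectors. -/
def wd {n : ℕ} (u v : Fin n → ℝ) : Mat n := fun μ ν => u μ * v ν - v μ * u ν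

def dt {n : ℕ} (u v : Fin n → ℝ) : ℝ := ∑ k, u k * v k

theorem brkt_wd {n : ℕ} (u v x z : Fin n → ℝ) :
    brkt (wd u v) (wd x z) = dt v x • wd u z - dt v z • wd u x - dt u x • wd v z
      + dt u z • wd v x := by
  funext μ ν
  simp only [brkt, wd, dt, Pi.add_apply, Pi.sub_apply, Pi.smul_apply, smul_eq_mul,
    Finset.sum_mul, ← Finset.sum_add_distrib, ← Finset.sum_sub_distrib]
  refine Finset.sum_congr rfl fun k _ => ?_
  ring

theorem dt_dl {n : ℕ} (u : Fin n → ℝ) (i : Fin n) : dt u (dl i) = u i := by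
  simp [dt, dl]

theorem dl_dt {n : ℕ} (u : Fin n → ℝ) (i : Fin n) : dt (dl i) u = u i := by
  simp [dt, dl]

theorem brkt_add_right {n : ℕ} (A B C : Mat n) : brkt A (B + C) = brkt A B + brkt A C := by
  funext μ ν
  simp only [brkt, Pi.add_apply, ← Finset.sum_add_distrib]
  exact Finset.sum_congr rfl fun k _ => by ring

theorem brkt_sub_right {n : ℕ} (A B C : Mat n) : brkt A (B - C) = brkt A B - brkt A C := by
  funext μ ν
  simp only [brkt, Pi.sub_apply, ← Finset.sum_sub_distrib]
  exact Finset.sum_congr rfl fun k _ => by ring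

theorem brkt_smul_right {n : ℕ} (c : ℝ) (A B : Mat n) : brkt A (c • B) = c • brkt A B := by
  funext μ ν
  simp only [brkt, Pi.smul_apply, smul_eq_mul, Finset.mul_sum]
  exact Finset.sum_congr rfl fun k _ => by ring

theorem brkt_add_left {n : ℕ} (A B C : Mat n) : brkt (B + C) A = brkt B A + brkt C A := by
  funext μ ν
  simp only [brkt, Pi.add_apply, ← Finset.sum_add_distrib]
  exact Finset.sum_congr rfl fun k _ => by ring

theorem brkt_sub_left {n : ℕ} (A B C : Mat n) : brkt (B - C) A = brkt B A - brkt C A := by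
  funext μ ν
  simp only [brkt, Pi.sub_apply, ← Finset.sum_sub_distrib]
  exact Finset.sum_congr rfl fun k _ => by ring

theorem brkt_smul_left {n : ℕ} (c : ℝ) (A B : Mat n) : brkt (c • B) A = c • brkt B A := by
  funext μ ν
  simp only [brkt, Pi.smul_apply, smul_eq_mul, Finset.mul_sum]
  exact Finset.sum_congr rfl fun k _ => by ring

/-- `f` is differentiable with `i`-th partial derivative `g`. -/
def HP {n : ℕ} (i : Fin n) (f g : En n → ℝ) : Prop :=
  ∀ z, DifferentiableAt ℝ f z ∧ pder i f z = g z

theorem HP.add {n : ℕ} {i : Fin n} {f g f' g' : En n → ℝ} (h : HP i f g) (h' : HP i f' g') :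
    HP i (fun z => f z + f' z) (fun z => g z + g' z) := fun z => by
  refine ⟨(h z).1.add (h' z).1, ?_⟩
  beta_reduce
  rw [← (h z).2, ← (h' z).2]
  simp only [pder]
  rw [fderiv_fun_add (h z).1 (h' z).1]; rfl

theorem HP.sub {n : ℕ} {i : Fin n} {f g f' g' : En n → ℝ} (h : HP i f g) (h' : HP i f' g') :
    HP i (fun z => f z - f' z) (fun z => g z - g' z) := fun z => by
  refine ⟨(h z).1.sub (h' z).1, ?_⟩
  beta_reduce
  rw [← (h z).2, ← (h' z).2]
  simp only [pder]
  rw [fderiv_fun_sub (h z).1 (h' z).1]; rfl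

theorem HP.mul {n : ℕ} {i : Fin n} {f g f' g' : En n → ℝ} (h : HP i f g) (h' : HP i f' g') :
    HP i (fun z => f z * f' z) (fun z => f z * g' z + g z * f' z) := fun z => by
  refine ⟨(h z).1.mul (h' z).1, ?_⟩
  beta_reduce
  rw [← (h z).2, ← (h' z).2]
  simp only [pder]
  rw [fderiv_fun_mul (h z).1 (h' z).1]
  simp; ring

theorem HP.const {n : ℕ} (i : Fin n) (c : ℝ) : HP i (fun _ => c) (fun _ => 0) := fun z => by
  refine ⟨differentiableAt_const c, ?_⟩
  simp [pder]

theorem HP.coord {n : ℕ} (i k : Fin n) : HP i (fun z => z k) (fun _ => dl i k) := fun z => by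
  have h : HasFDerivAt (fun z : En n => z k) (EuclideanSpace.proj k : En n →L[ℝ] ℝ) z :=
    (EuclideanSpace.proj k : En n →L[ℝ] ℝ).hasFDerivAt
  refine ⟨h.differentiableAt, ?_⟩
  rw [pder, h.fderiv]
  simp [dl, eq_comm]

theorem HP.congr {n : ℕ} {i : Fin n} {f g f' g' : En n → ℝ} (h : HP i f g)
    (e : ∀ z, f' z = f z) (e' : ∀ z, g' z = g z) : HP i f' g' := by
  rw [show f' = f from funext e, show g' = g from funext e']; exact h

theorem HP.normsq {n : ℕ} (i : Fin n) : HP i (fun z => ‖z‖ ^ 2) (fun z => 2 * z i) := fun z => by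
  have h := (hasStrictFDerivAt_norm_sq (F := En n) z).hasFDerivAt
  refine ⟨h.differentiableAt, ?_⟩
  rw [pder, h.fderiv]
  simp [EuclideanSpace.inner_single_right]

theorem HP.inv {n : ℕ} {i : Fin n} {f g : En n → ℝ} (h : HP i f g) (h0 : ∀ z, f z ≠ 0) :
    HP i (fun z => (f z)⁻¹) (fun z => - (f z)⁻¹ * (f z)⁻¹ * g z) := fun z => by
  have h1 := (h z).1.hasFDerivAt
  have h2 := (hasDerivAt_inv (h0 z)).comp_hasFDerivAt z h1
  refine ⟨h2.differentiableAt, ?_⟩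
  beta_reduce
  rw [← (h z).2, pder]
  have : fderiv ℝ (fun z => (f z)⁻¹) z = _ := h2.fderiv
  rw [this]
  simp only [smul_apply, smul_eq_mul, pder, sq, mul_inv]
  ring

theorem HP.pder_eq {n : ℕ} {i : Fin n} {f g : En n → ℝ} (h : HP i f g) :
    (fun z => pder i f z) = g := funext fun z => (h z).2


theorem sum_wd_left {n : ℕ} (x v : Fin n → ℝ) : ∑ i, x i • wd (dl i) v = wd x v := by
  funext μ ν
  simp only [Finset.sum_apply, Pi.smul_apply, smul_eq_mul, wd]
  have h1 : ∀ i, x i * (dl i μ * v ν - v μ * dl i ν)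
      = v ν * (dl i μ * x i) - v μ * (dl i ν * x i) := fun i => by ring
  simp only [h1, Finset.sum_sub_distrib, ← Finset.mul_sum, dl_sum]
  ring

theorem wd_swap {n : ℕ} (u v : Fin n → ℝ) : wd u v = - wd v u := by
  funext μ ν; simp only [wd, Pi.neg_apply]; ring

theorem wd_self {n : ℕ} (u : Fin n → ℝ) : wd u u = 0 := by
  funext μ ν; simp only [wd, Pi.zero_apply]; ring

theorem sum_wd_right {n : ℕ} (x v : Fin n → ℝ) : ∑ i, x i • wd v (dl i) = wd v x := by
  rw [wd_swap v x, ← sum_wd_left, ← Finset.sum_neg_distrib]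
  refine Finset.sum_congr rfl fun i _ => ?_
  rw [wd_swap v, smul_neg]

theorem dl_fun {n : ℕ} (k : Fin n) : (fun i => dl i k) = dl k := funext fun i => dl_comm i k

theorem brkt_sum_right {n : ℕ} (A : Mat n) (B : Fin n → Mat n) :
    brkt A (∑ i, B i) = ∑ i, brkt A (B i) := by
  funext μ ν
  simp only [brkt, Finset.sum_apply, Finset.mul_sum, Finset.sum_mul, ← Finset.sum_sub_distrib]
  exact Finset.sum_comm

theorem brkt_sum_left {n : ℕ} (A : Mat n) (B : Fin n → Mat n) :
    brkt (∑ i, B i) A = ∑ i, brkt (B i) A := by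
  funext μ ν
  simp only [brkt, Finset.sum_apply, Finset.mul_sum, Finset.sum_mul, ← Finset.sum_sub_distrib]
  exact Finset.sum_comm

theorem brkt_zero_left {n : ℕ} (A : Mat n) : brkt 0 A = 0 := by
  funext μ ν; simp [brkt]

theorem brkt_zero_right {n : ℕ} (A : Mat n) : brkt A 0 = 0 := by
  funext μ ν; simp [brkt]

theorem brkt_self {n : ℕ} (A : Mat n) : brkt A A = 0 := by
  funext μ ν; simp [brkt]

theorem dt_comm {n : ℕ} (u v : Fin n → ℝ) : dt u v = dt v u := by
  simp only [dt, mul_comm]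

/-- `∑ [y∧e_i, e_i∧v] = (n-2) y∧v`. -/
theorem sumA {n : ℕ} (y v : Fin n → ℝ) :
    ∑ i, brkt (wd y (dl i)) (wd (dl i) v) = ((n : ℝ) - 2) • wd y v := by
  simp only [brkt_wd, dt_dl, dl_dt, dl_self, wd_self, smul_zero, add_zero, Finset.sum_sub_distrib,
    sum_wd_left, sum_wd_right, Finset.sum_const, Finset.card_univ, Fintype.card_fin, one_smul]
  rw [← Nat.cast_smul_eq_nsmul ℝ]
  module

/-- `∑ x_i [y∧e_i, M] = [y∧x, M]`. -/
theorem sumB {n : ℕ} (x y : Fin n → ℝ) (M : Mat n) :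
    ∑ i, x i • brkt (wd y (dl i)) M = brkt (wd y x) M := by
  simp only [← brkt_smul_left, ← brkt_sum_left, sum_wd_right]

theorem sumB' {n : ℕ} (x y : Fin n → ℝ) (M : Mat n) :
    ∑ i, x i • brkt M (wd (dl i) y) = brkt M (wd x y) := by
  simp only [← brkt_smul_right, ← brkt_sum_right, sum_wd_left]

theorem brkt_y {n : ℕ} (y u v : Fin n → ℝ) :
    brkt (wd y u) (wd y v) = dt y u • wd y v - dt y v • wd y u - dt y y • wd u v := by
  rw [brkt_wd, wd_self, wd_swap u y, dt_comm u y]; module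

/-- The Casimir-type sum. -/
theorem sumC {n : ℕ} (y u v : Fin n → ℝ) :
    ∑ i, brkt (wd y (dl i)) (brkt (wd y (dl i)) (wd u v))
      = (4 - (n : ℝ)) • (dt y u • wd y v - dt y v • wd y u) - (2 * dt y y) • wd u v := by
  have h : ∀ i, brkt (wd y (dl i)) (brkt (wd y (dl i)) (wd u v))
      = u i • brkt (wd y (dl i)) (wd y v) - v i • brkt (wd y (dl i)) (wd y u)
        - dt y u • brkt (wd y (dl i)) (wd (dl i) v) + dt y v • brkt (wd y (dl i)) (wd (dl i) u) := by
    intro i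
    rw [brkt_wd y (dl i) u v]
    simp only [brkt_add_right, brkt_sub_right, brkt_smul_right, dl_dt]
  simp only [h, Finset.sum_add_distrib, Finset.sum_sub_distrib, ← Finset.smul_sum, sumA, sumB]
  simp only [brkt_y]
  rw [wd_swap v u]
  module

/-- T tensor. -/
def TT {n : ℕ} (A j : Fin n) (y : Fin n → ℝ) : Mat n := y A • wd y (dl j) - y j • wd y (dl A)

def KK {n : ℕ} (A j : Fin n) : Mat n := wd (dl A) (dl j)

def HH {n : ℕ} (c q : ℝ) (A j : Fin n) (y : Fin n → ℝ) : Mat n := c • TT A j y + q • KK A j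

def dH {n : ℕ} (c : ℝ) (i A j : Fin n) (y : Fin n → ℝ) : Mat n :=
  c • (dl i A • wd y (dl j) + y A • wd (dl i) (dl j) - dl i j • wd y (dl A)
    - y j • wd (dl i) (dl A)) - (2 * c * y i) • KK A j

def ddH {n : ℕ} (c : ℝ) (i A j : Fin n) : Mat n :=
  c • ((2 * dl i A) • wd (dl i) (dl j) - (2 * dl i j) • wd (dl i) (dl A)) - (2 * c) • KK A j

theorem sum_ddH {n : ℕ} (c : ℝ) (A j : Fin n) :
    ∑ i, ddH c i A j = (c * (4 - 2 * n)) • KK A j := by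
  simp only [ddH, Finset.sum_sub_distrib, ← Finset.smul_sum, mul_smul, sum_wd_left,
    Finset.sum_const, Finset.card_univ, Fintype.card_fin, dl_fun, KK]
  rw [wd_swap (dl j), ← Nat.cast_smul_eq_nsmul ℝ]
  module

theorem sum_ydH {n : ℕ} (c : ℝ) (A j : Fin n) (y : Fin n → ℝ) :
    ∑ i, y i • dH c i A j y = (2 * c) • (TT A j y - dt y y • KK A j) := by
  have h : ∀ i, y i • dH c i A j y = (c * (dl i A * y i)) • wd y (dl j)
      + (c * y A) • y i • wd (dl i) (dl j) - (c * (dl i j * y i)) • wd y (dl A)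
      - (c * y j) • y i • wd (dl i) (dl A) - (2 * c * (y i * y i)) • KK A j := by
    intro i; unfold dH; module
  simp only [h, Finset.sum_add_distrib, Finset.sum_sub_distrib, ← Finset.smul_sum, sum_wd_left,
    ← Finset.sum_smul, ← Finset.mul_sum, dl_sum]
  unfold TT dt
  module

theorem brkt_TT {n : ℕ} (A j : Fin n) (y : Fin n → ℝ) :
    brkt (wd y (dl A)) (wd y (dl j)) = TT A j y - dt y y • KK A j := by
  rw [brkt_y, dt_dl, dt_dl]; rfl

theorem KK_swap {n : ℕ} (A j : Fin n) : KK j A = - KK A j := wd_swap _ _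

theorem TT_swap {n : ℕ} (A j : Fin n) (y : Fin n → ℝ) : TT j A y = - TT A j y := by
  unfold TT; module

theorem sum_WdH {n : ℕ} (c : ℝ) (A j : Fin n) (y : Fin n → ℝ) :
    ∑ i, brkt (wd y (dl i)) (dH c i A j y)
      = c • ((n : ℝ) • TT A j y - (2 * dt y y) • KK A j) := by
  have h : ∀ i, brkt (wd y (dl i)) (dH c i A j y)
      = c • dl i A • brkt (wd y (dl i)) (wd y (dl j))
      + (c * y A) • brkt (wd y (dl i)) (wd (dl i) (dl j))
      - c • dl i j • brkt (wd y (dl i)) (wd y (dl A))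
      - (c * y j) • brkt (wd y (dl i)) (wd (dl i) (dl A))
      - (2 * c) • y i • brkt (wd y (dl i)) (KK A j) := by
    intro i; unfold dH
    simp only [brkt_add_right, brkt_sub_right, brkt_smul_right]
    module
  simp only [h, Finset.sum_add_distrib, Finset.sum_sub_distrib, ← Finset.smul_sum, sumA, sumB,
    dl_fun, wd_self, brkt_zero_left]
  simp only [brkt_TT]
  rw [TT_swap A j, KK_swap A j]
  unfold TT
  module

theorem sum_WWH {n : ℕ} (c q : ℝ) (A j : Fin n) (y : Fin n → ℝ) :
    ∑ i, brkt (wd y (dl i)) (brkt (wd y (dl i)) (HH c q A j y))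
      = (c * (2 - n) * dt y y) • TT A j y
        + q • ((4 - (n : ℝ)) • TT A j y - (2 * dt y y) • KK A j) := by
  simp only [HH, TT, KK, brkt_add_right, brkt_sub_right, brkt_smul_right, Finset.sum_add_distrib,
    Finset.sum_sub_distrib, ← Finset.smul_sum, sumC, dt_dl, wd_self]
  module

theorem sum_D {n : ℕ} (A : Fin n) (y : Fin n → ℝ) :
    ∑ i, brkt (wd (dl A) (dl i)) (wd y (dl i)) = ((n : ℝ) - 2) • wd y (dl A) := by
  have h : ∀ i, brkt (wd (dl A) (dl i)) (wd y (dl i)) 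
     = y i • wd (dl A) (dl i) - wd (dl A) y + dl i A • wd (dl i) y := by
    intro i
    simp only [brkt_wd, dt_dl, dl_dt, dl_self, wd_self, dl_comm A i]; module
  simp only [h, Finset.sum_add_distrib, Finset.sum_sub_distrib, sum_wd_left, sum_wd_right, dl_fun,
    Finset.sum_const, Finset.card_univ, Fintype.card_fin]
  rw [← Nat.cast_smul_eq_nsmul ℝ, wd_swap y]
  module

theorem sum_HH {n : ℕ} (c q : ℝ) (A j : Fin n) (y : Fin n → ℝ) :
    ∑ i, brkt (HH c q A i y) (HH c q i j y)
      = (c * q * (n - 2)) • TT A j y - (c ^ 2 * dt y y + 2 * c * q) • (TT A j y - dt y y • KK A j)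
        + (q ^ 2 * (n - 2)) • KK A j := by
  have h : ∀ i, brkt (HH c q A i y) (HH c q i j y) =
      (c ^ 2 * y A) • y i • brkt (wd y (dl i)) (wd y (dl j))
      + (c * q * y A) • brkt (wd y (dl i)) (wd (dl i) (dl j))
      - (c ^ 2 * (y i * y i)) • brkt (wd y (dl A)) (wd y (dl j))
      - (c ^ 2 * y j) • y i • brkt (wd y (dl i)) (wd y (dl A))
      - (c * q) • y i • brkt (wd y (dl A)) (wd (dl i) (dl j))
      - (c * q) • y i • brkt (wd (dl i) (dl A)) (wd y (dl j))
      - (c * q * y j) • brkt (wd (dl A) (dl i)) (wd y (dl i))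
      + (q ^ 2) • brkt (wd (dl A) (dl i)) (wd (dl i) (dl j)) := by
    intro i
    have e1 : brkt (wd y (dl i)) (wd y (dl A)) = - brkt (wd y (dl A)) (wd y (dl i)) := by
      funext μ ν; simp only [brkt, Pi.neg_apply, ← Finset.sum_neg_distrib]
      exact Finset.sum_congr rfl fun k _ => by ring
    have e2 : brkt (wd (dl i) (dl A)) (wd y (dl j)) = - brkt (wd (dl A) (dl i)) (wd y (dl j)) := by
      rw [wd_swap, ← neg_one_smul ℝ, brkt_smul_left, neg_one_smul]
    rw [e1, e2]
    unfold HH TT KK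
    simp only [brkt_add_right, brkt_sub_right, brkt_smul_right, brkt_add_left, brkt_sub_left,
      brkt_smul_left, brkt_self]
    module
  have e3 : ∑ i, y i • brkt (wd (dl i) (dl A)) (wd y (dl j))
      = brkt (wd y (dl A)) (wd y (dl j)) := by
    simp only [← brkt_smul_left, ← brkt_sum_left, sum_wd_left]
  simp only [h, Finset.sum_add_distrib, Finset.sum_sub_distrib, ← Finset.smul_sum, sumA, sumB,
    sumB', e3, wd_self, brkt_zero_left, sum_D, ← Finset.sum_smul, ← Finset.mul_sum]
  simp only [brkt_TT]
  change _ - (c ^ 2 * dt y y) • _ - _ - _ - _ - _ + _ = _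
  unfold TT KK
  module


theorem dt_norm {n : ℕ} (z : En n) : dt z.ofLp z.ofLp = ‖z‖ ^ 2 := by
  rw [EuclideanSpace.real_norm_sq_eq]
  simp only [dt, sq]

theorem HP_wd {n : ℕ} (i k μ ν : Fin n) :
    HP i (fun z => wd z.ofLp (dl k) μ ν) (fun _ => wd (dl i) (dl k) μ ν) := by
  refine (((HP.coord i μ).mul (HP.const i (dl k ν))).sub
    ((HP.const i (dl k μ)).mul (HP.coord i ν))).congr (fun z => ?_) (fun z => ?_)
  · simp only [wd]
  · simp only [wd]; ring

theorem HP_HH {n : ℕ} (b c : ℝ) (i A j μ ν : Fin n) :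
    HP i (fun z => HH c (2 * b - c * ‖z‖ ^ 2) A j z.ofLp μ ν)
      (fun z => dH c i A j z.ofLp μ ν) := by
  refine (((HP.const i c).mul (((HP.coord i A).mul (HP_wd i j μ ν)).sub
    ((HP.coord i j).mul (HP_wd i A μ ν)))).add (((HP.const i (2 * b)).sub
    ((HP.const i c).mul (HP.normsq i))).mul (HP.const i (KK A j μ ν)))).congr
      (fun z => ?_) (fun z => ?_)
  · simp only [HH, TT, Pi.add_apply, Pi.sub_apply, Pi.smul_apply, smul_eq_mul]
  · simp only [dH, Pi.add_apply, Pi.sub_apply, Pi.smul_apply, smul_eq_mul]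
    ring

theorem HP_dH {n : ℕ} (c : ℝ) (i A j μ ν : Fin n) :
    HP i (fun z => dH c i A j z.ofLp μ ν) (fun _ => ddH c i A j μ ν) := by
  refine (((HP.const i c).mul (((((HP.const i (dl i A)).mul (HP_wd i j μ ν)).add
    ((HP.coord i A).mul (HP.const i (wd (dl i) (dl j) μ ν)))).sub
    ((HP.const i (dl i j)).mul (HP_wd i A μ ν))).sub
    ((HP.coord i j).mul (HP.const i (wd (dl i) (dl A) μ ν))))).sub
    (((HP.const i (2 * c)).mul (HP.coord i i)).mul (HP.const i (KK A j μ ν)))).congr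
      (fun z => ?_) (fun z => ?_)
  · simp only [dH, Pi.add_apply, Pi.sub_apply, Pi.smul_apply, smul_eq_mul]
  · simp only [ddH, Pi.add_apply, Pi.sub_apply, Pi.smul_apply, smul_eq_mul, dl_self]
    ring

/-- The radial factor. -/
def EE {n : ℕ} (a b : ℝ) (z : En n) : ℝ := (a * ‖z‖ ^ 2 + b)⁻¹

theorem HP_EE {n : ℕ} {a b : ℝ} (h0 : ∀ z : En n, a * ‖z‖ ^ 2 + b ≠ 0) (i : Fin n) :
    HP i (EE a b) (fun z => -2 * a * z i * EE a b z ^ 2) := by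
  refine ((((HP.const i a).mul (HP.normsq i)).add (HP.const i b)).inv h0).congr
    (fun z => rfl) (fun z => ?_)
  simp only [EE]; ring

theorem HP_u {n : ℕ} {a b : ℝ} (h0 : ∀ z : En n, a * ‖z‖ ^ 2 + b ≠ 0) (c : ℝ)
    (i A j μ ν : Fin n) :
    HP i (fun z => EE a b z ^ 2 * HH c (2 * b - c * ‖z‖ ^ 2) A j z.ofLp μ ν)
      (fun z => EE a b z ^ 2 * dH c i A j z.ofLp μ ν
        - 4 * a * z i * EE a b z ^ 3 * HH c (2 * b - c * ‖z‖ ^ 2) A j z.ofLp μ ν) := by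
  refine (((HP_EE h0 i).mul (HP_EE h0 i)).mul (HP_HH b c i A j μ ν)).congr
    (fun z => ?_) (fun z => ?_) <;> ring

theorem HP_du {n : ℕ} {a b : ℝ} (h0 : ∀ z : En n, a * ‖z‖ ^ 2 + b ≠ 0) (c : ℝ)
    (i A j μ ν : Fin n) :
    HP i (fun z => EE a b z ^ 2 * dH c i A j z.ofLp μ ν
        - 4 * a * z i * EE a b z ^ 3 * HH c (2 * b - c * ‖z‖ ^ 2) A j z.ofLp μ ν)
      (fun z => EE a b z ^ 2 * ddH c i A j μ ν
        - 8 * a * EE a b z ^ 3 * (z i * dH c i A j z.ofLp μ ν)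
        + (-4 * a * EE a b z ^ 3 + 24 * a ^ 2 * EE a b z ^ 4 * (z i * z i))
          * HH c (2 * b - c * ‖z‖ ^ 2) A j z.ofLp μ ν) := by
  have hE := HP_EE h0 i
  refine (((hE.mul hE).mul (HP_dH c i A j μ ν)).sub
    ((((HP.const i (4 * a)).mul (HP.coord i i)).mul (hE.mul (hE.mul hE))).mul
      (HP_HH b c i A j μ ν))).congr (fun z => ?_) (fun z => ?_)
  · ring
  · simp only [dl_self]; ring

theorem Wc_eq {n : ℕ} (i : Fin n) (z : En n) :
    Wc i z = EE (aC n) (bC n) z • wd z.ofLp (dl i) := by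
  funext μ ν
  simp only [Wc, sigmaM, EE, wd, dl, Pi.smul_apply, smul_eq_mul]
  split_ifs <;> ring

theorem pderM_Wc {n : ℕ} (h0 : ∀ z : En n, aC n * ‖z‖ ^ 2 + bC n ≠ 0) (i j : Fin n) (z : En n) :
    pderM i (Wc j) z = EE (aC n) (bC n) z • wd (dl i) (dl j)
      - (2 * aC n * z i * EE (aC n) (bC n) z ^ 2) • wd z.ofLp (dl j) := by
  funext μ ν
  have h : HP i (fun z => Wc j z μ ν) (fun z => EE (aC n) (bC n) z * wd (dl i) (dl j) μ ν
      - (2 * aC n * z i * EE (aC n) (bC n) z ^ 2) * wd z.ofLp (dl j) μ ν) := by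
    refine ((HP_EE h0 i).mul (HP_wd i j μ ν)).congr (fun z => ?_) (fun z => ?_)
    · rw [Wc_eq]; rfl
    · ring
  exact (h z).2

theorem Fc_eq {n : ℕ} (h0 : ∀ z : En n, aC n * ‖z‖ ^ 2 + bC n ≠ 0) (A j : Fin n) (z : En n) :
    Fc A j z = EE (aC n) (bC n) z ^ 2 •
      HH (1 - 2 * aC n) (2 * bC n - (1 - 2 * aC n) * ‖z‖ ^ 2) A j z.ofLp := by
  have hE : EE (aC n) (bC n) z * (aC n * ‖z‖ ^ 2 + bC n) = 1 := inv_mul_cancel₀ (h0 z)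
  unfold Fc
  rw [pderM_Wc h0, pderM_Wc h0, Wc_eq, Wc_eq, brkt_smul_left, brkt_smul_right, brkt_TT, dt_norm]
  have e : EE (aC n) (bC n) z • wd (dl A) (dl j)
      = (EE (aC n) (bC n) z ^ 2 * (aC n * ‖z‖ ^ 2 + bC n)) • KK A j := by
    rw [sq, mul_assoc, hE, mul_one]; rfl
  have e' : EE (aC n) (bC n) z • wd (dl j) (dl A)
      = - (EE (aC n) (bC n) z ^ 2 * (aC n * ‖z‖ ^ 2 + bC n)) • KK A j := by
    rw [wd_swap, smul_neg, e, neg_smul]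
  rw [e, e']
  unfold HH TT
  module

theorem constants {n : ℕ} (hn : 5 ≤ n) (hn' : n ≤ 9) :
    (n : ℝ) = 8 * aC n ^ 2 + 2 ∧ bC n = 8 * aC n * (1 - aC n) * (2 * aC n - 1) ∧
      0 < aC n ∧ 0 < bC n := by
  have h5 : (5 : ℝ) ≤ n := by exact_mod_cast hn
  have h9 : (n : ℝ) ≤ 9 := by exact_mod_cast hn'
  have ha0 : 0 < aC n := by
    unfold aC
    have : 0 < Real.sqrt ((n : ℝ) - 2) := Real.sqrt_pos.mpr (by linarith)
    positivity
  have hsq : aC n ^ 2 = ((n : ℝ) - 2) / 8 := by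
    unfold aC
    rw [div_pow, mul_pow, Real.sq_sqrt (by linarith), Real.sq_sqrt (by norm_num)]
    norm_num
  have hN : (n : ℝ) = 8 * aC n ^ 2 + 2 := by rw [hsq]; ring
  have hr : Real.sqrt (2 * (n : ℝ) - 4) = 4 * aC n := by
    rw [Real.sqrt_eq_iff_mul_self_eq (by linarith) (by linarith)]
    nlinarith
  have hb : bC n = 8 * aC n * (1 - aC n) * (2 * aC n - 1) := by
    unfold bC
    rw [hr]
    have : ∀ N a : ℝ, N = 8 * a ^ 2 + 2 →
        1 / 2 * (6 * N - 12 - (N + 2) * (4 * a)) = 8 * a * (1 - a) * (2 * a - 1) := by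
      intro N a h; rw [h]; ring
    exact this _ _ hN
  refine ⟨hN, hb, ha0, ?_⟩
  rw [hb]
  have h1 : aC n < 1 := by nlinarith
  have h2 : 1 / 2 < aC n := by nlinarith
  have h3 : 0 < 1 - aC n := by linarith
  have h4 : 0 < 2 * aC n - 1 := by linarith
  positivity

theorem final_identity (a s N b E T K : ℝ) (hN : N = 8 * a ^ 2 + 2)
    (hb : b = 8 * a * (1 - a) * (2 * a - 1)) (hD : E * (a * s + b) = 1) (c q : ℝ)
    (hc : c = 1 - 2 * a) (hq : q = 2 * b - c * s) :
    E ^ 2 * (c * (4 - 2 * N) * K) - 8 * a * E ^ 3 * (2 * c * (T - s * K))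
      + (-4 * a * N * E ^ 3 + 24 * a ^ 2 * E ^ 4 * s) * (c * T + q * K)
      - 1 / 2 * (E ^ 2 * (2 * c * (T - s * K)) - 4 * a * s * E ^ 3 * (c * T + q * K))
      - 1 / 2 * (E ^ 2 * (c * T + q * K))
      + 2 * (E ^ 3 * (c * (N * T - 2 * s * K)))
      + E ^ 4 * (c * (2 - N) * s * T + q * ((4 - N) * T - 2 * s * K))
      + 2 * (E ^ 4 * (c * q * (N - 2) * T - (c ^ 2 * s + 2 * c * q) * (T - s * K)
        + q ^ 2 * (N - 2) * K))
      = 1 / 2 * (E ^ 2 * (c * T + q * K)) := by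
  have h2 : E ^ 2 = E ^ 4 * (a * s + b) ^ 2 := by
    linear_combination (-E ^ 2 * (1 + E * (a * s + b))) * hD
  have h3 : E ^ 3 = E ^ 4 * (a * s + b) := by
    linear_combination (-E ^ 3) * hD
  rw [h2, h3]
  subst hq hc hb hN
  ring

end SpatialHelpers

/-- For each `α`, the tuple `F_α = (F_{α1},…,F_{αn})` of curvature components of the soliton `W`
satisfies `L(F_α) = (1/2)·F_α` pointwise; i.e. each `F_α` is an eigenfunction of `−L` with
eigenvalue `−1/2`, corresponding to spatial translations of the soliton. -/
theorem spatial_translation_eigenfunction (n : ℕ) (hn : 5 ≤ n) (hn' : n ≤ 9)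
    (α : Fin n) (y : En n) (j : Fin n) :
    Lop (fun z i => Fc α i z) y j = (1 / 2 : ℝ) • Fc α j y := by
  obtain ⟨hN, hb, ha0, hb0⟩ := constants hn hn'
  have h0 : ∀ z : En n, aC n * ‖z‖ ^ 2 + bC n ≠ 0 := fun z => by positivity
  have hD : EE (aC n) (bC n) y * (aC n * ‖y‖ ^ 2 + bC n) = 1 := inv_mul_cancel₀ (h0 y)
  obtain ⟨c, hc⟩ : ∃ c, c = 1 - 2 * aC n := ⟨_, rfl⟩
  have hF : ∀ (A k : Fin n) (z : En n), Fc A k z = EE (aC n) (bC n) z ^ 2 •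
      HH c (2 * bC n - c * ‖z‖ ^ 2) A k z.ofLp := fun A k z => by
    rw [hc]; exact Fc_eq h0 A k z
  have hp : ∀ i, pderM i (fun z => Fc α j z) y
      = EE (aC n) (bC n) y ^ 2 • dH c i α j y.ofLp
        - (4 * aC n * EE (aC n) (bC n) y ^ 3) • y i •
          HH c (2 * bC n - c * ‖y‖ ^ 2) α j y.ofLp := fun i => by
    funext μ ν
    have h := (HP_u h0 c i α j μ ν y).2
    simp only [pderM, hF, Pi.smul_apply, smul_eq_mul, Pi.sub_apply]
    rw [h]; ring
  have hl : lapM (fun z => Fc α j z) y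
      = EE (aC n) (bC n) y ^ 2 • (∑ i, ddH c i α j)
        - (8 * aC n * EE (aC n) (bC n) y ^ 3) • (∑ i, y i • dH c i α j y.ofLp)
        + (-4 * aC n * n * EE (aC n) (bC n) y ^ 3
            + 24 * aC n ^ 2 * EE (aC n) (bC n) y ^ 4 * ‖y‖ ^ 2) •
          HH c (2 * bC n - c * ‖y‖ ^ 2) α j y.ofLp := by
    funext μ ν
    have e0 : ∀ i, pder i (fun z => pder i (fun z => Fc α j z μ ν) z) y
        = pder i (fun z => EE (aC n) (bC n) z ^ 2 * dH c i α j z.ofLp μ ν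
        - 4 * aC n * z i * EE (aC n) (bC n) z ^ 3
          * HH c (2 * bC n - c * ‖z‖ ^ 2) α j z.ofLp μ ν) y := fun i => by
      simp only [hF, Pi.smul_apply, smul_eq_mul]
      rw [(HP_u h0 c i α j μ ν).pder_eq]
    have e := fun i => (e0 i).trans (HP_du h0 c i α j μ ν y).2
    simp only [lapM, lapS, e, Pi.add_apply, Pi.sub_apply, Pi.smul_apply, smul_eq_mul,
      Finset.sum_apply, Finset.sum_add_distrib, Finset.sum_sub_distrib, ← Finset.mul_sum,
      ← Finset.sum_mul, Finset.sum_const, Finset.card_univ, Fintype.card_fin, nsmul_eq_mul]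
    have e2 : ∑ i, y i * y i = ‖y‖ ^ 2 := dt_norm y
    rw [e2]
    ring
  have h1 : ∑ i, y i • pderM i (fun z => Fc α j z) y
      = EE (aC n) (bC n) y ^ 2 • (∑ i, y i • dH c i α j y.ofLp)
        - (4 * aC n * ‖y‖ ^ 2 * EE (aC n) (bC n) y ^ 3) •
          HH c (2 * bC n - c * ‖y‖ ^ 2) α j y.ofLp := by
    have e : ∀ i, y i • pderM i (fun z => Fc α j z) y
        = EE (aC n) (bC n) y ^ 2 • y i • dH c i α j y.ofLp
          - (4 * aC n * EE (aC n) (bC n) y ^ 3) • (y i * y i) •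
            HH c (2 * bC n - c * ‖y‖ ^ 2) α j y.ofLp := fun i => by
      rw [hp]; module
    simp only [e, Finset.sum_sub_distrib, ← Finset.smul_sum, ← Finset.sum_smul]
    rw [← dt_norm]
    change _ - _ • dt y.ofLp y.ofLp • _ = _
    module
  have h2 : ∑ i, brkt (Wc i y) (pderM i (fun z => Fc α j z) y)
      = EE (aC n) (bC n) y ^ 3 • (∑ i, brkt (wd y.ofLp (dl i)) (dH c i α j y.ofLp)) := by
    have e : ∀ i, brkt (Wc i y) (pderM i (fun z => Fc α j z) y)
        = EE (aC n) (bC n) y ^ 3 • brkt (wd y.ofLp (dl i)) (dH c i α j y.ofLp)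
          - (4 * aC n * EE (aC n) (bC n) y ^ 4) • y i • brkt (wd y.ofLp (dl i))
            (HH c (2 * bC n - c * ‖y‖ ^ 2) α j y.ofLp) := fun i => by
      rw [hp, Wc_eq]
      simp only [brkt_smul_left, brkt_smul_right, brkt_sub_right]
      module
    simp only [e, Finset.sum_sub_distrib, ← Finset.smul_sum, sumB, wd_self, brkt_zero_left,
      smul_zero, sub_zero]
  have h3 : ∑ i, brkt (Wc i y) (brkt (Wc i y) (Fc α j y))
      = EE (aC n) (bC n) y ^ 4 • ∑ i, brkt (wd y.ofLp (dl i)) (brkt (wd y.ofLp (dl i))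
          (HH c (2 * bC n - c * ‖y‖ ^ 2) α j y.ofLp)) := by
    rw [Finset.smul_sum]
    refine Finset.sum_congr rfl fun i _ => ?_
    rw [hF, Wc_eq]
    simp only [brkt_smul_left, brkt_smul_right]
    module
  have h4 : ∑ i, brkt (Fc α i y) (Fc i j y)
      = EE (aC n) (bC n) y ^ 4 • ∑ i, brkt (HH c (2 * bC n - c * ‖y‖ ^ 2) α i y.ofLp)
          (HH c (2 * bC n - c * ‖y‖ ^ 2) i j y.ofLp) := by
    rw [Finset.smul_sum]
    refine Finset.sum_congr rfl fun i _ => ?_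
    rw [hF, hF]
    simp only [brkt_smul_left, brkt_smul_right]
    module
  unfold Lop
  rw [hl, h1, h2, h3, h4, sum_ddH, sum_ydH, sum_WdH, sum_WWH, sum_HH, dt_norm]
  simp only [hF]
  funext μ ν
  have := final_identity (aC n) (‖y‖ ^ 2) n (bC n) (EE (aC n) (bC n) y) (TT α j y.ofLp μ ν)
    (KK α j μ ν) hN hb hD c _ hc rfl
  simp only [HH, Pi.add_apply, Pi.sub_apply, Pi.smul_apply, smul_eq_mul]
  linear_combination this
end
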